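/- arXiv:1405.7542 — 5 statements merged into one kernel-verified Lean document; each statement's English description precedes it below -/
import Mathlib

section
/- Let m be a positive integer and define φ_m(ρ) := (1/(2π)) ∫_ℝ e^{-iρr} e^{-r^{2m}} dr. Then there exists a constant C > 0 such that |φ_m(ρ)| ≤ C · exp(−|ρ|^{1 + 1/(2m)}) for all ρ ∈ ℝ. -/
open MeasureTheory

/-- The Fourier transform `φ_m(ρ) := (1/(2π)) ∫_ℝ e^{-iρr} e^{-r^{2m}} dr`. -/
noncomputable def phiFT (m : ℕ) (ρ : ℝ) : ℂ :=
  (1 / (2 * Real.pi)) *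
    ∫ r : ℝ, Complex.exp (-(Complex.I * (ρ : ℂ) * (r : ℂ))) * (Real.exp (-(r ^ (2 * m))) : ℂ)

open Filter Topology

lemma aux_re (m : ℕ) (hm : 0 < m) : ∃ C : ℝ, 0 < C ∧ ∀ r y : ℝ,
    r ^ 2 / 2 - 1 / 2 - C * y ^ (2 * m) ≤ (((r : ℂ) + y * Complex.I) ^ (2 * m)).re := by
  have hcont : Continuous (fun t : ℝ => ((1 + (t : ℂ) * Complex.I) ^ (2 * m)).re) := by fun_prop
  have h1 : ∀ᶠ t : ℝ in 𝓝 0, (1 / 2 : ℝ) < ((1 + (t : ℂ) * Complex.I) ^ (2 * m)).re := by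
    have := hcont.tendsto 0
    apply this.eventually
    apply lt_mem_nhds
    norm_num
  obtain ⟨ε, hε, hball⟩ := Metric.eventually_nhds_iff.1 h1
  refine ⟨(1 / ε * 2 + 1) ^ (2 * m) + (1 / ε * 2) ^ (2 * m), by positivity, fun r y => ?_⟩
  have hr : r ^ 2 - 1 ≤ r ^ (2 * m) := by
    rw [pow_mul]
    by_cases h : 1 ≤ r ^ 2
    · have := le_self_pow₀ h hm.ne'
      linarith
    · have : 0 ≤ (r ^ 2) ^ m := by positivity
      linarith
  have hev : Even (2 * m) := even_two_mul m
  have hy0 : 0 ≤ y ^ (2 * m) := hev.pow_nonneg y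
  have hr0 : 0 ≤ r ^ (2 * m) := hev.pow_nonneg r
  by_cases h : |y| ≤ ε / 2 * |r|
  · by_cases hr00 : r = 0
    · subst hr00
      have hy : y = 0 := by simpa using h
      subst hy
      have : 2 * m ≠ 0 := by omega
      simp [this]
    have h2 : (1 / 2 : ℝ) < ((1 + ((y / r : ℝ) : ℂ) * Complex.I) ^ (2 * m)).re := by
      apply hball
      rw [Real.dist_eq, sub_zero, abs_div, div_lt_iff₀ (abs_pos.2 hr00)]
      have := abs_pos.2 hr00
      nlinarith
    have h3 : ((r : ℂ) + y * Complex.I) ^ (2 * m)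
        = ((r ^ (2 * m) : ℝ) : ℂ) * (1 + ((y / r : ℝ) : ℂ) * Complex.I) ^ (2 * m) := by
      rw [Complex.ofReal_pow, ← mul_pow]
      congr 1
      have : (r : ℂ) ≠ 0 := by exact_mod_cast hr00
      push_cast
      field_simp
    rw [h3, Complex.re_ofReal_mul]
    have h4 : 0 ≤ ((1 / ε * 2 + 1) ^ (2 * m) + (1 / ε * 2) ^ (2 * m)) * y ^ (2 * m) := by positivity
    nlinarith
  · push Not at h
    have hry : |r| ≤ 1 / ε * 2 * |y| := by
      have : |r| = 1 / ε * 2 * (ε / 2 * |r|) := by field_simp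
      rw [this]
      gcongr
    have h5 : r ^ (2 * m) ≤ (1 / ε * 2) ^ (2 * m) * y ^ (2 * m) := by
      rw [← hev.pow_abs r, ← hev.pow_abs y, ← mul_pow]
      gcongr
    have h6 : ‖((r : ℂ) + y * Complex.I) ^ (2 * m)‖ ≤ (1 / ε * 2 + 1) ^ (2 * m) * y ^ (2 * m) := by
      rw [norm_pow, ← hev.pow_abs y, ← mul_pow]
      gcongr
      refine (norm_add_le _ _).trans ?_
      simp only [norm_mul, Complex.norm_real, Complex.norm_I, Real.norm_eq_abs, mul_one]
      linarith
    have h7 := (abs_le.1 ((Complex.abs_re_le_norm _).trans h6)).1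
    nlinarith

lemma aux_shift (f : ℂ → ℂ) (hf : Differentiable ℂ f) (Y B : ℝ)
    (hB : ∀ x y : ℝ, |y| ≤ |Y| → ‖f (x + y * Complex.I)‖ ≤ B * Real.exp (-(1 / 2) * x ^ 2)) :
    ∫ x : ℝ, f x = ∫ x : ℝ, f (x + Y * Complex.I) := by
  have hg : Integrable (fun x : ℝ => B * Real.exp (-(1 / 2) * x ^ 2)) :=
    (integrable_exp_neg_mul_sq (by norm_num)).const_mul B
  have hInt : ∀ y : ℝ, |y| ≤ |Y| → Integrable (fun x : ℝ => f (x + y * Complex.I)) := by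
    intro y hy
    refine hg.mono' ?_ (Eventually.of_forall fun x => hB x y hy)
    have := hf.continuous
    exact Continuous.aestronglyMeasurable (by fun_prop)
  have hIntZ : Integrable (fun x : ℝ => f x) := by simpa using hInt 0 (by simp)
  have hIntY := hInt Y le_rfl
  have t1 := intervalIntegral_tendsto_integral hIntZ tendsto_neg_atTop_atBot tendsto_id
  have t2 := intervalIntegral_tendsto_integral hIntY tendsto_neg_atTop_atBot tendsto_id
  have hexp : Tendsto (fun T : ℝ => B * Real.exp (-(1 / 2) * T ^ 2) * |Y - 0|) atTop (𝓝 0) := by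
    have : Tendsto (fun T : ℝ => Real.exp (-(1 / 2) * T ^ 2)) atTop (𝓝 0) := by
      apply Real.tendsto_exp_atBot.comp
      apply Tendsto.const_mul_atTop_of_neg (by norm_num)
      exact tendsto_pow_atTop (by norm_num)
    simpa using (this.const_mul B).mul_const |Y - 0|
  have hvert : ∀ σ : ℝ, σ ^ 2 = 1 →
      Tendsto (fun T : ℝ => ∫ y : ℝ in (0 : ℝ)..Y, f ((σ * T : ℝ) + y * Complex.I)) atTop (𝓝 0) := by
    intro σ hσ
    refine squeeze_zero_norm (fun T => ?_) hexp
    apply intervalIntegral.norm_integral_le_of_norm_le_const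
    intro y hy
    have hy' : |y| ≤ |Y| := by
      have := Set.abs_sub_left_of_mem_uIcc (Set.uIoc_subset_uIcc hy)
      simpa using this
    have := hB (σ * T) y hy'
    rwa [mul_pow, hσ, one_mul] at this
  have v1 := hvert 1 (by norm_num)
  have v2 := hvert (-1) (by norm_num)
  have key : ∀ T : ℝ, (∫ x in (-T)..T, f x) = (∫ x in (-T)..T, f (x + Y * Complex.I))
      - Complex.I * (∫ y : ℝ in (0 : ℝ)..Y, f (((1 : ℝ) * T : ℝ) + y * Complex.I))
      + Complex.I * (∫ y : ℝ in (0 : ℝ)..Y, f (((-1 : ℝ) * T : ℝ) + y * Complex.I)) := by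
    intro T
    have := Complex.integral_boundary_rect_eq_zero_of_differentiableOn f
      (((-T : ℝ) : ℂ)) ((T : ℂ) + Y * Complex.I) hf.differentiableOn
    simp at this
    simp
    linear_combination this
  have t3 := (t2.sub (v1.const_mul Complex.I)).add (v2.const_mul Complex.I)
  simp only [mul_zero, sub_zero, add_zero] at t3
  refine tendsto_nhds_unique t1 (t3.congr fun T => ?_)
  exact (key T).symm

lemma aux_bound (m : ℕ) (hm : 0 < m) : ∃ C K : ℝ, 0 < C ∧ 0 < K ∧ ∀ ρ y : ℝ,
    ‖phiFT m ρ‖ ≤ K * Real.exp (ρ * y + C * y ^ (2 * m)) := by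
  obtain ⟨C, hC, h⟩ := aux_re m hm
  have hJ : 0 < ∫ x : ℝ, Real.exp (-(1 / 2) * x ^ 2) := by
    rw [integral_gaussian]
    positivity
  refine ⟨C, (1 / (2 * Real.pi)) * (Real.exp (1 / 2) * ∫ x : ℝ, Real.exp (-(1 / 2) * x ^ 2)), hC,
    by positivity, fun ρ Y => ?_⟩
  have hev : Even (2 * m) := even_two_mul m
  set f : ℂ → ℂ := fun z => Complex.exp (-(Complex.I * ρ * z) - z ^ (2 * m)) with hfdef
  have hf : Differentiable ℂ f := by
    intro z
    fun_prop
  have hb : ∀ x y : ℝ, ‖f (x + y * Complex.I)‖ ≤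
      Real.exp (1 / 2) * Real.exp (ρ * y + C * y ^ (2 * m)) * Real.exp (-(1 / 2) * x ^ 2) := by
    intro x y
    rw [hfdef]
    simp only [Complex.norm_exp]
    rw [← Real.exp_add, ← Real.exp_add, Real.exp_le_exp, Complex.sub_re]
    have h1 : (-(Complex.I * (ρ : ℂ) * (x + y * Complex.I))).re = ρ * y := by simp
    rw [h1]
    linarith [h x y]
  have hs := aux_shift f hf Y (Real.exp (1 / 2) * Real.exp (|ρ| * |Y| + C * Y ^ (2 * m))) (by
    intro x y hy
    refine (hb x y).trans ?_
    gcongr ?_ * Real.exp ?_ * ?_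
    · refine add_le_add ?_ ?_
      · refine (le_abs_self _).trans ?_
        rw [abs_mul]
        gcongr
      · rw [← hev.pow_abs y, ← hev.pow_abs Y]
        gcongr)
  have heq : phiFT m ρ = (1 / (2 * Real.pi)) * ∫ x : ℝ, f x := by
    rw [phiFT]
    congr 2
    funext r
    rw [hfdef]
    simp only [Complex.ofReal_exp, ← Complex.exp_add]
    congr 1
    push_cast
    ring
  rw [heq, hs, norm_mul]
  have h1 : ‖(1 / (2 * Real.pi) : ℂ)‖ = 1 / (2 * Real.pi) := by
    simp [abs_of_pos Real.pi_pos]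
  rw [h1, mul_assoc]
  gcongr
  have hg : Integrable (fun x : ℝ => Real.exp (1 / 2) * Real.exp (ρ * Y + C * Y ^ (2 * m))
      * Real.exp (-(1 / 2) * x ^ 2)) :=
    (integrable_exp_neg_mul_sq (by norm_num)).const_mul _
  refine (norm_integral_le_of_norm_le hg (Eventually.of_forall fun x => hb x Y)).trans ?_
  rw [integral_const_mul]
  apply le_of_eq
  ring

theorem stmt1 (m : ℕ) (hm : 0 < m) :
    ∃ C > 0, ∀ ρ : ℝ,
      ‖phiFT m ρ‖ ≤ C * Real.exp (-(|ρ| ^ (1 + 1 / (2 * (m : ℝ))))) := by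
  obtain ⟨C, K, hC, hK, h⟩ := aux_bound m hm
  set D : ℝ := C * 2 ^ (2 * m) with hD
  have hD0 : 0 < D := by positivity
  refine ⟨K * Real.exp (D * D ^ (2 * m)), by positivity, fun ρ => ?_⟩
  have hev : Even (2 * m) := even_two_mul m
  have hm' : (0 : ℝ) < m := by exact_mod_cast hm
  set u : ℝ := |ρ| ^ (1 / (2 * (m : ℝ))) with hu
  have hu0 : 0 ≤ u := by positivity
  have hpow : |ρ| ^ (1 + 1 / (2 * (m : ℝ))) = |ρ| * u := by
    rw [Real.rpow_add_of_nonneg (abs_nonneg _) (by norm_num) (by positivity), Real.rpow_one]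
  have hum : u ^ (2 * m) = |ρ| := by
    rw [hu, ← Real.rpow_natCast, ← Real.rpow_mul (abs_nonneg _)]
    push_cast
    rw [one_div_mul_cancel (by positivity), Real.rpow_one]
  have hlast : D * |ρ| ≤ |ρ| * u + D * D ^ (2 * m) := by
    have h0 := abs_nonneg ρ
    by_cases hh : D ≤ u
    · have : 0 ≤ D * D ^ (2 * m) := by positivity
      nlinarith
    · push Not at hh
      have : |ρ| ≤ D ^ (2 * m) := by
        rw [← hum]
        gcongr
      nlinarith [mul_nonneg h0 hu0]
  have hfin : ∀ y : ℝ, ρ * y = -(2 * (|ρ| * u)) → y ^ (2 * m) = 2 ^ (2 * m) * |ρ| →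
      ‖phiFT m ρ‖ ≤ K * Real.exp (D * D ^ (2 * m)) *
        Real.exp (-(|ρ| ^ (1 + 1 / (2 * (m : ℝ))))) := by
    intro y h1 h2
    refine (h ρ y).trans ?_
    rw [mul_assoc, ← Real.exp_add, hpow, h1, h2, ← mul_assoc C, ← hD]
    refine mul_le_mul_of_nonneg_left (Real.exp_le_exp.2 ?_) hK.le
    linarith
  rcases le_total 0 ρ with hρ | hρ
  · apply hfin (-(2 * u))
    · rw [abs_of_nonneg hρ]
      ring
    · rw [hev.neg_pow, mul_pow, hum]
  · apply hfin (2 * u)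
    · rw [abs_of_nonpos hρ]
      ring
    · rw [mul_pow, hum]
end

section
/- The integral ∫_{ℝ^N} e^{-xᵀKx − P(x)} dx admits the representation ∫_{ℝ^N} e^{-xᵀKx − P(x)} dx = e^{M} · ∫_ℝ φ_m(ρ) ( ∫_{ℝ^N} e^{-xᵀKx} e^{iρ · P̃(x)^{1/(2m)}} dx ) dρ; in particular the order of the ρ-integration and x-integration on the right-hand side may be interchanged. -/
open MeasureTheory Matrix

lemma aux_iter (m n : ℕ) : ∃ q : Polynomial ℝ,
    iteratedDeriv n (fun r : ℝ => ((Real.exp (-(r ^ (2 * m))) : ℝ) : ℂ)) =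
      fun r : ℝ => ((q.eval r * Real.exp (-(r ^ (2 * m))) : ℝ) : ℂ) := by
  induction n with
  | zero => exact ⟨1, by funext r; simp⟩
  | succ k ih =>
    obtain ⟨q, hq⟩ := ih
    refine ⟨Polynomial.derivative q - q * (Polynomial.derivative (Polynomial.X ^ (2 * m))), ?_⟩
    rw [iteratedDeriv_succ, hq]
    funext r
    have h1 := q.hasDerivAt r
    have h2 := ((Polynomial.X ^ (2 * m) : Polynomial ℝ).hasDerivAt r).neg.exp
    have h3 := (h1.mul h2).ofReal_comp.deriv
    simp only [Polynomial.eval_pow, Polynomial.eval_X] at h3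
    simp only [Polynomial.eval_sub, Polynomial.eval_mul]
    refine Eq.trans ?_ (h3.trans ?_)
    · congr 1
    · congr 1
      simp
      ring

lemma aux_pow (m : ℕ) (hm : 0 < m) (k : ℕ) (x : ℝ) :
    |x| ^ k * Real.exp (-(x ^ (2 * m))) ≤ k.factorial * Real.exp 1 := by
  have h0 : |x| ≤ 1 + x ^ (2 * m) := by
    have e : x ^ (2 * m) = |x| ^ (2 * m) := by rw [pow_mul, pow_mul, sq_abs]
    rw [e]
    have hx := abs_nonneg x
    rcases le_total |x| 1 with h | h
    · have : 0 ≤ |x| ^ (2 * m) := by positivity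
      linarith
    · have := le_self_pow₀ h (show 2 * m ≠ 0 by omega)
      linarith
  have h1 := Real.pow_div_factorial_le_exp |x| (abs_nonneg x) k
  rw [div_le_iff₀ (by positivity)] at h1
  calc |x| ^ k * Real.exp (-(x ^ (2 * m)))
      ≤ (Real.exp |x| * k.factorial) * Real.exp (-(x ^ (2 * m))) := by gcongr
    _ = k.factorial * Real.exp (|x| - x ^ (2 * m)) := by
        rw [sub_eq_add_neg, Real.exp_add]; ring
    _ ≤ _ := by
        gcongr
        linarith

lemma aux_decay (m : ℕ) (hm : 0 < m) (q : Polynomial ℝ) : ∀ k : ℕ, ∃ C : ℝ, ∀ x : ℝ,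
    |x| ^ k * (|q.eval x| * Real.exp (-(x ^ (2 * m)))) ≤ C := by
  induction q using Polynomial.induction_on' with
  | add p q hp hq =>
    intro k
    obtain ⟨C, hC⟩ := hp k
    obtain ⟨D, hD⟩ := hq k
    refine ⟨C + D, fun x => ?_⟩
    rw [Polynomial.eval_add]
    calc _ ≤ |x| ^ k * ((|p.eval x| + |q.eval x|) * Real.exp (-(x ^ (2 * m)))) := by
          gcongr
          exact abs_add_le _ _
      _ ≤ _ := by linarith [hC x, hD x]
  | monomial n a =>
    intro k
    refine ⟨|a| * ((k + n).factorial * Real.exp 1), fun x => ?_⟩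
    have := mul_le_mul_of_nonneg_left (aux_pow m hm (k + n) x) (abs_nonneg a)
    refine le_trans (le_of_eq ?_) this
    rw [Polynomial.eval_monomial, abs_mul, abs_pow, pow_add]
    ring

lemma aux_schwartz (m : ℕ) (hm : 0 < m) : ∃ f : SchwartzMap ℝ ℂ,
    ∀ r : ℝ, f r = ((Real.exp (-(r ^ (2 * m))) : ℝ) : ℂ) := by
  refine ⟨⟨fun r : ℝ => ((Real.exp (-(r ^ (2 * m))) : ℝ) : ℂ), ?_, ?_⟩, fun r => rfl⟩
  · exact Complex.ofRealCLM.contDiff.comp (Real.contDiff_exp.comp (contDiff_id.pow (2 * m)).neg)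
  · intro k n
    obtain ⟨q, hq⟩ := aux_iter m n
    obtain ⟨C, hC⟩ := aux_decay m hm q k
    refine ⟨C, fun x => ?_⟩
    rw [norm_iteratedFDeriv_eq_norm_iteratedDeriv, hq, Complex.norm_real, Real.norm_eq_abs,
      Real.norm_eq_abs, abs_mul, abs_of_pos (Real.exp_pos _)]
    exact hC x

open scoped FourierTransform in
lemma aux_phi (m : ℕ) (hm : 0 < m) : Integrable (phiFT m) ∧ ∀ r : ℝ,
    ∫ ρ : ℝ, phiFT m ρ * Complex.exp (Complex.I * (ρ : ℂ) * (r : ℂ)) =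
      ((Real.exp (-(r ^ (2 * m))) : ℝ) : ℂ) := by
  obtain ⟨f, hf⟩ := aux_schwartz m hm
  have hpi : (2 * Real.pi) ≠ 0 := by positivity
  have hpiC : (Real.pi : ℂ) ≠ 0 := by exact_mod_cast Real.pi_ne_zero
  have hF : Integrable (𝓕 (f : ℝ → ℂ)) := by
    rw [← SchwartzMap.fourier_coe]; exact (𝓕 f).integrable
  have hphi : phiFT m = fun ρ : ℝ => (1 / (2 * Real.pi) : ℂ) * 𝓕 (f : ℝ → ℂ) (ρ / (2 * Real.pi)) := by
    funext ρ
    rw [phiFT, Real.fourier_real_eq_integral_exp_smul]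
    congr 1
    refine integral_congr_ae (Filter.Eventually.of_forall fun r => ?_)
    simp only [hf, smul_eq_mul]
    congr 2
    push_cast
    field_simp
  refine ⟨?_, fun r => ?_⟩
  · rw [hphi]
    exact (hF.comp_div hpi).const_mul _
  · have hinv := congrFun (f.continuous.fourierInv_fourier_eq f.integrable hF) r
    rw [Real.fourierInv_eq', hf] at hinv
    rw [← hinv, hphi]
    have h := Measure.integral_comp_div
      (fun v : ℝ => Complex.exp (((2 * Real.pi * inner ℝ v r : ℝ) : ℂ) * Complex.I) •
        𝓕 (f : ℝ → ℂ) v) (2 * Real.pi)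
    rw [abs_of_pos (by positivity)] at h
    have h' : (∫ v : ℝ, Complex.exp (((2 * Real.pi * inner ℝ v r : ℝ) : ℂ) * Complex.I) •
        𝓕 (f : ℝ → ℂ) v) = (1 / (2 * Real.pi) : ℂ) * ((2 * Real.pi) •
        (∫ v : ℝ, Complex.exp (((2 * Real.pi * inner ℝ v r : ℝ) : ℂ) * Complex.I) •
        𝓕 (f : ℝ → ℂ) v)) := by
      have e0 : (1 / (2 * Real.pi) : ℂ) * ((2 * Real.pi : ℝ) : ℂ) = 1 := by
        push_cast
        field_simp
      rw [Complex.real_smul, ← mul_assoc, e0, one_mul]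
    rw [h', ← h, ← integral_const_mul]
    refine integral_congr_ae (Filter.Eventually.of_forall fun ρ => ?_)
    simp only [smul_eq_mul]
    have e : Complex.I * (ρ : ℂ) * (r : ℂ) =
        ((2 * Real.pi * inner ℝ (ρ / (2 * Real.pi)) r : ℝ) : ℂ) * Complex.I := by
      simp only [real_inner_eq_re_inner, RCLike.inner_apply, conj_trivial, RCLike.re_to_real]
      push_cast
      field_simp
    rw [e]
    ring

lemma aux_gauss_bound (N : ℕ) (hN : 0 < N) (K : Matrix (Fin N) (Fin N) ℝ) (hK : K.PosDef) :
    ∃ c : ℝ, 0 < c ∧ ∀ x : Fin N → ℝ, c * ∑ i, x i ^ 2 ≤ x ⬝ᵥ K *ᵥ x := by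
  have hcont : Continuous fun x : Fin N → ℝ => x ⬝ᵥ K *ᵥ x := by
    unfold dotProduct mulVec dotProduct
    fun_prop
  haveI : Nonempty (Fin N) := ⟨⟨0, hN⟩⟩
  obtain ⟨y, hy, hmin⟩ := (isCompact_sphere (0 : Fin N → ℝ) 1).exists_isMinOn
    (NormedSpace.sphere_nonempty.2 zero_le_one) hcont.continuousOn
  have hy0 : y ≠ 0 := by
    rintro rfl
    simp at hy
  have hpos : 0 < y ⬝ᵥ K *ᵥ y := by simpa using hK.dotProduct_mulVec_pos hy0
  have hNr : (0 : ℝ) < N := by exact_mod_cast hN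
  refine ⟨(y ⬝ᵥ K *ᵥ y) / N, by positivity, fun x => ?_⟩
  by_cases hx : x = 0
  · subst hx; simp
  have hn : 0 < ‖x‖ := norm_pos_iff.2 hx
  have hz : ‖x‖⁻¹ • x ∈ Metric.sphere (0 : Fin N → ℝ) 1 := by
    simp [norm_smul, hn.ne']
  have h1 : y ⬝ᵥ K *ᵥ y ≤ (‖x‖⁻¹ • x) ⬝ᵥ K *ᵥ (‖x‖⁻¹ • x) := hmin hz
  rw [mulVec_smul, smul_dotProduct, dotProduct_smul, smul_eq_mul, smul_eq_mul] at h1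
  have h2 : (y ⬝ᵥ K *ᵥ y) * ‖x‖ ^ 2 ≤ x ⬝ᵥ K *ᵥ x := by
    calc _ ≤ (‖x‖⁻¹ * (‖x‖⁻¹ * (x ⬝ᵥ K *ᵥ x))) * ‖x‖ ^ 2 := by gcongr
      _ = _ := by field_simp
  have h3 : ∑ i, x i ^ 2 ≤ N * ‖x‖ ^ 2 := by
    calc ∑ i, x i ^ 2 ≤ ∑ _i : Fin N, ‖x‖ ^ 2 := by
          refine Finset.sum_le_sum fun i _ => ?_
          rw [← sq_abs]
          have := norm_le_pi_norm x i
          rw [Real.norm_eq_abs] at this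
          gcongr
      _ = _ := by simp
  calc _ ≤ (y ⬝ᵥ K *ᵥ y) / N * (N * ‖x‖ ^ 2) := by gcongr
    _ = (y ⬝ᵥ K *ᵥ y) * ‖x‖ ^ 2 := by field_simp
    _ ≤ _ := h2

lemma aux_gauss (N : ℕ) (hN : 0 < N) (K : Matrix (Fin N) (Fin N) ℝ) (hK : K.PosDef) :
    Integrable fun x : Fin N → ℝ => Complex.exp (-((x ⬝ᵥ K *ᵥ x : ℝ) : ℂ)) := by
  obtain ⟨c, hc, hb⟩ := aux_gauss_bound N hN K hK
  have hcont : Continuous fun x : Fin N → ℝ => x ⬝ᵥ K *ᵥ x := by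
    unfold dotProduct mulVec dotProduct
    fun_prop
  have h := GaussianFourier.integrable_cexp_neg_mul_sum_add (b := (c : ℂ)) (ι := Fin N)
    (by simpa using hc) 0
  refine h.mono (by fun_prop) (Filter.Eventually.of_forall fun x => ?_)
  rw [Complex.norm_exp, Complex.norm_exp]
  have e : (-(c : ℂ) * ∑ i, (x i : ℂ) ^ 2 + ∑ i, (0 : Fin N → ℂ) i * (x i : ℂ)) =
      ((-(c * ∑ i, x i ^ 2) : ℝ) : ℂ) := by
    push_cast
    simp
  rw [e, ← Complex.ofReal_neg, Complex.ofReal_re, Complex.ofReal_re]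
  have := hb x
  gcongr

theorem stmt5 (N m : ℕ) (hN : 0 < N) (hm : 0 < m)
    (p : MvPolynomial (Fin N) ℝ) (hdeg : p.totalDegree = 2 * m)
    (M : ℝ) (hM : 0 ≤ M) (hPbound : ∀ x : Fin N → ℝ, -M ≤ MvPolynomial.eval x p)
    (K : Matrix (Fin N) (Fin N) ℝ) (hK : K.PosDef) :
    (((∫ x : Fin N → ℝ, Real.exp (-(x ⬝ᵥ K *ᵥ x) - MvPolynomial.eval x p) : ℝ) : ℂ) =
        (Real.exp M : ℂ) *
          ∫ ρ : ℝ, phiFT m ρ *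
            ∫ x : Fin N → ℝ, Complex.exp (-((x ⬝ᵥ K *ᵥ x : ℝ) : ℂ)) *
              Complex.exp (Complex.I * (ρ : ℂ) *
                (((MvPolynomial.eval x p + M) ^ ((1 : ℝ) / (2 * m)) : ℝ) : ℂ))) ∧
      ((∫ ρ : ℝ, ∫ x : Fin N → ℝ,
          phiFT m ρ * Complex.exp (-((x ⬝ᵥ K *ᵥ x : ℝ) : ℂ)) *
            Complex.exp (Complex.I * (ρ : ℂ) *
              (((MvPolynomial.eval x p + M) ^ ((1 : ℝ) / (2 * m)) : ℝ) : ℂ))) =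
        ∫ x : Fin N → ℝ, ∫ ρ : ℝ,
          phiFT m ρ * Complex.exp (-((x ⬝ᵥ K *ᵥ x : ℝ) : ℂ)) *
            Complex.exp (Complex.I * (ρ : ℂ) *
              (((MvPolynomial.eval x p + M) ^ ((1 : ℝ) / (2 * m)) : ℝ) : ℂ))) := by
  obtain ⟨hphi, hinv⟩ := aux_phi m hm
  have hg := aux_gauss N hN K hK
  have hQ : Continuous fun x : Fin N → ℝ =>
      (MvPolynomial.eval x p + M) ^ ((1 : ℝ) / (2 * m)) :=
    (p.continuous_eval.add continuous_const).rpow_const fun x => Or.inr (by positivity)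
  have hswap : (∫ ρ : ℝ, ∫ x : Fin N → ℝ,
          phiFT m ρ * Complex.exp (-((x ⬝ᵥ K *ᵥ x : ℝ) : ℂ)) *
            Complex.exp (Complex.I * (ρ : ℂ) *
              (((MvPolynomial.eval x p + M) ^ ((1 : ℝ) / (2 * m)) : ℝ) : ℂ))) =
        ∫ x : Fin N → ℝ, ∫ ρ : ℝ,
          phiFT m ρ * Complex.exp (-((x ⬝ᵥ K *ᵥ x : ℝ) : ℂ)) *
            Complex.exp (Complex.I * (ρ : ℂ) *
              (((MvPolynomial.eval x p + M) ^ ((1 : ℝ) / (2 * m)) : ℝ) : ℂ)) := by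
    apply integral_integral_swap
    have hc : Continuous fun z : ℝ × (Fin N → ℝ) => Complex.exp (Complex.I * (z.1 : ℂ) *
        (((MvPolynomial.eval z.2 p + M) ^ ((1 : ℝ) / (2 * m)) : ℝ) : ℂ)) := by
      have h2 := hQ.comp (continuous_snd (X := ℝ) (Y := Fin N → ℝ))
      exact Complex.continuous_exp.comp ((continuous_const.mul
        (Complex.continuous_ofReal.comp continuous_fst)).mul (Complex.continuous_ofReal.comp h2))
    refine (hphi.mul_prod hg).mul_bdd (c := 1) hc.aestronglyMeasurable
      (Filter.Eventually.of_forall fun z => ?_)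
    rw [Complex.norm_exp]
    simp
  refine ⟨?_, hswap⟩
  have e1 : (∫ ρ : ℝ, phiFT m ρ *
            ∫ x : Fin N → ℝ, Complex.exp (-((x ⬝ᵥ K *ᵥ x : ℝ) : ℂ)) *
              Complex.exp (Complex.I * (ρ : ℂ) *
                (((MvPolynomial.eval x p + M) ^ ((1 : ℝ) / (2 * m)) : ℝ) : ℂ))) =
      ∫ ρ : ℝ, ∫ x : Fin N → ℝ,
          phiFT m ρ * Complex.exp (-((x ⬝ᵥ K *ᵥ x : ℝ) : ℂ)) *
            Complex.exp (Complex.I * (ρ : ℂ) *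
              (((MvPolynomial.eval x p + M) ^ ((1 : ℝ) / (2 * m)) : ℝ) : ℂ)) := by
    refine integral_congr_ae (Filter.Eventually.of_forall fun ρ => ?_)
    simp only [mul_assoc]
    rw [← integral_const_mul]
  rw [e1, hswap, ← integral_const_mul, ← integral_complex_ofReal]
  refine integral_congr_ae (Filter.Eventually.of_forall fun x => ?_)
  have h0 : 0 ≤ MvPolynomial.eval x p + M := by linarith [hPbound x]
  have hm' : (m : ℝ) ≠ 0 := by positivity
  have hroot : ((MvPolynomial.eval x p + M) ^ ((1 : ℝ) / (2 * m))) ^ (2 * m) =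
      MvPolynomial.eval x p + M := by
    rw [← Real.rpow_natCast, ← Real.rpow_mul h0]
    push_cast
    rw [one_div, inv_mul_cancel₀ (by positivity), Real.rpow_one]
  have h3 := hinv ((MvPolynomial.eval x p + M) ^ ((1 : ℝ) / (2 * m)))
  rw [hroot] at h3
  have e2 : ∀ ρ : ℝ, phiFT m ρ * Complex.exp (-((x ⬝ᵥ K *ᵥ x : ℝ) : ℂ)) *
            Complex.exp (Complex.I * (ρ : ℂ) *
              (((MvPolynomial.eval x p + M) ^ ((1 : ℝ) / (2 * m)) : ℝ) : ℂ)) =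
      Complex.exp (-((x ⬝ᵥ K *ᵥ x : ℝ) : ℂ)) * (phiFT m ρ *
            Complex.exp (Complex.I * (ρ : ℂ) *
              (((MvPolynomial.eval x p + M) ^ ((1 : ℝ) / (2 * m)) : ℝ) : ℂ))) :=
    fun ρ => by ring
  simp only [e2]
  rw [integral_const_mul, h3, ← Complex.ofReal_neg, ← Complex.ofReal_exp, ← Complex.ofReal_mul,
    ← Complex.ofReal_mul, ← Real.exp_add, ← Real.exp_add]
  congr 2
  ring
end

section
/- For every R > 0, the double series of absolute values is finite: ∑_{n=0}^∞ (1/n!) ∫_{-R}^{R} ∫_{ℝ^N} |φ_m(ρ)| · |ρ|^n · P̃(x)^{n/(2m)} · e^{-xᵀKx} dx dρ < ∞. -/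
open MeasureTheory Matrix

lemma poly_bound_aux (N m : ℕ) (p : MvPolynomial (Fin N) ℝ) (hdeg : p.totalDegree = 2 * m)
    (M : ℝ) (hm : 0 < m) : ∃ C : ℝ, 1 ≤ C ∧ ∀ x : Fin N → ℝ,
      MvPolynomial.eval x p + M ≤ (C * (1 + ‖x‖)) ^ (2 * m) := by
  set S : ℝ := ∑ d ∈ p.support, |p.coeff d| with hS
  have hS0 : 0 ≤ S := Finset.sum_nonneg fun _ _ => abs_nonneg _
  refine ⟨1 + S + |M|, by linarith [abs_nonneg M], fun x => ?_⟩
  have hx : 1 ≤ 1 + ‖x‖ := by linarith [norm_nonneg x]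
  have h1 : MvPolynomial.eval x p ≤ S * (1 + ‖x‖) ^ (2 * m) := by
    rw [MvPolynomial.eval_eq', hS, Finset.sum_mul]
    refine Finset.sum_le_sum fun d hd => ?_
    refine (le_abs_self _).trans ?_
    rw [abs_mul, Finset.abs_prod]
    refine mul_le_mul_of_nonneg_left ?_ (abs_nonneg _)
    calc ∏ i, |x i ^ d i| ≤ ∏ i, (1 + ‖x‖) ^ d i := by
          refine Finset.prod_le_prod (fun _ _ => abs_nonneg _) fun i _ => ?_
          rw [abs_pow]
          refine pow_le_pow_left₀ (abs_nonneg _) ?_ _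
          have := norm_le_pi_norm x i
          rw [Real.norm_eq_abs] at this
          linarith
      _ = (1 + ‖x‖) ^ (∑ i, d i) := Finset.prod_pow_eq_pow_sum _ _ _
      _ ≤ (1 + ‖x‖) ^ (2 * m) := by
          refine pow_le_pow_right₀ hx ?_
          rw [← hdeg]
          have := MvPolynomial.le_totalDegree hd
          rwa [Finsupp.sum_fintype _ _ (fun _ => rfl)] at this
  have h2 : M ≤ |M| * (1 + ‖x‖) ^ (2 * m) := by
    have := one_le_pow₀ hx (n := 2 * m)
    nlinarith [abs_nonneg M, le_abs_self M]
  have h3 : 1 + S + |M| ≤ (1 + S + |M|) ^ (2 * m) :=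
    le_self_pow₀ (by linarith [abs_nonneg M]) (by omega)
  rw [mul_pow]
  have h4 : 0 < (1 + ‖x‖) ^ (2 * m) := by positivity
  nlinarith

lemma posDef_bound_aux (N : ℕ) (K : Matrix (Fin N) (Fin N) ℝ) (hK : K.PosDef) :
    ∃ c : ℝ, 0 < c ∧ ∀ x : Fin N → ℝ, c * ‖x‖ ^ 2 ≤ x ⬝ᵥ K *ᵥ x := by
  have hcont : Continuous fun x : Fin N → ℝ => x ⬝ᵥ K *ᵥ x := by
    fun_prop
  have hpos : ∀ x : Fin N → ℝ, x ≠ 0 → 0 < x ⬝ᵥ K *ᵥ x := fun x hx => by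
    simpa using hK.dotProduct_mulVec_pos hx
  by_cases hne : (Metric.sphere (0 : Fin N → ℝ) 1).Nonempty
  · obtain ⟨y, hy, hmin⟩ := (isCompact_sphere (0 : Fin N → ℝ) 1).exists_isMinOn hne hcont.continuousOn
    have hy0 : y ≠ 0 := by
      rintro rfl
      simp at hy
    refine ⟨_, hpos y hy0, fun x => ?_⟩
    by_cases hx : x = 0
    · simp [hx]
    have hn : 0 < ‖x‖ := norm_pos_iff.2 hx
    have hz : ‖x‖⁻¹ • x ∈ Metric.sphere (0 : Fin N → ℝ) 1 := by
      simp [norm_smul, hn.ne']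
    have h := hmin hz
    simp only [Set.mem_ofPred_eq, Matrix.mulVec_smul, dotProduct_smul, smul_dotProduct, smul_eq_mul] at h
    calc _ ≤ (‖x‖⁻¹ * (‖x‖⁻¹ * (x ⬝ᵥ K *ᵥ x))) * ‖x‖ ^ 2 :=
          mul_le_mul_of_nonneg_right h (by positivity)
      _ = _ := by field_simp
  · refine ⟨1, one_pos, fun x => ?_⟩
    by_cases hx : x = 0
    · simp [hx]
    exact absurd ⟨‖x‖⁻¹ • x, by simp [norm_smul, hx]⟩ hne

lemma phi_bound_aux (m : ℕ) : ∃ B : ℝ, 0 ≤ B ∧ ∀ ρ, ‖phiFT m ρ‖ ≤ B := by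
  refine ⟨‖(1 / (2 * Real.pi) : ℂ)‖ * ∫ r : ℝ, Real.exp (-(r ^ (2 * m))), ?_, fun ρ => ?_⟩
  · exact mul_nonneg (norm_nonneg _) (integral_nonneg fun _ => (Real.exp_pos _).le)
  rw [phiFT, norm_mul]
  refine mul_le_mul_of_nonneg_left ((norm_integral_le_integral_norm _).trans (le_of_eq ?_))
    (norm_nonneg _)
  congr 1
  ext r
  rw [norm_mul, Complex.norm_exp, Complex.norm_real, Real.norm_of_nonneg (Real.exp_pos _).le]
  simp

lemma gauss_aux (N : ℕ) (hN : 0 < N) (A c : ℝ) (hc : 0 < c) :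
    Integrable fun x : Fin N → ℝ => Real.exp (A * (1 + ‖x‖)) * Real.exp (-(c * ‖x‖ ^ 2)) := by
  set b : ℝ := c / 2 / N with hb
  have hN' : (0 : ℝ) < N := by exact_mod_cast hN
  have hb0 : 0 < b := by positivity
  have hI : Integrable fun x : Fin N → ℝ =>
      Real.exp (A + A ^ 2 / (2 * c)) * ∏ i, Real.exp (-b * x i ^ 2) :=
    (Integrable.fintype_prod (f := fun _ t => Real.exp (-b * t ^ 2))
      fun _ => integrable_exp_neg_mul_sq hb0).const_mul _
  refine hI.mono' (by fun_prop) (Filter.Eventually.of_forall fun x => ?_)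
  rw [Real.norm_of_nonneg (by positivity), ← Real.exp_add, ← Real.exp_sum, ← Real.exp_add]
  refine Real.exp_le_exp.2 ?_
  rw [← Finset.mul_sum]
  have h1 : ∑ i, x i ^ 2 ≤ N * ‖x‖ ^ 2 := by
    calc ∑ i, x i ^ 2 ≤ ∑ _i : Fin N, ‖x‖ ^ 2 := by
          refine Finset.sum_le_sum fun i _ => ?_
          have := norm_le_pi_norm x i
          rw [← sq_abs (x i)]
          exact pow_le_pow_left₀ (abs_nonneg _) this 2
      _ = _ := by simp
  have h2 : b * ∑ i, x i ^ 2 ≤ c / 2 * ‖x‖ ^ 2 := by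
    calc _ ≤ b * (N * ‖x‖ ^ 2) := mul_le_mul_of_nonneg_left h1 hb0.le
      _ = _ := by rw [hb]; field_simp
  have h3 : A * ‖x‖ ≤ A ^ 2 / (2 * c) + c / 2 * ‖x‖ ^ 2 := by
    have : A ^ 2 / (2 * c) + c / 2 * ‖x‖ ^ 2 - A * ‖x‖ = (A - c * ‖x‖) ^ 2 / (2 * c) := by
      field_simp; ring
    have : 0 ≤ (A - c * ‖x‖) ^ 2 / (2 * c) := by positivity
    linarith
  linarith

theorem stmt7 (N m : ℕ) (hN : 0 < N) (hm : 0 < m)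
    (p : MvPolynomial (Fin N) ℝ) (hdeg : p.totalDegree = 2 * m)
    (M : ℝ) (hM : 0 ≤ M) (hPbound : ∀ x : Fin N → ℝ, -M ≤ MvPolynomial.eval x p)
    (K : Matrix (Fin N) (Fin N) ℝ) (hK : K.PosDef) (R : ℝ) (hR : 0 < R) :
    (∑' n : ℕ, ((n.factorial : ENNReal))⁻¹ *
        ∫⁻ ρ in Set.Icc (-R) R, ∫⁻ x : Fin N → ℝ,
          ENNReal.ofReal (‖phiFT m ρ‖ * |ρ| ^ n *
            (MvPolynomial.eval x p + M) ^ ((n : ℝ) / (2 * m)) *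
            Real.exp (-(x ⬝ᵥ K *ᵥ x)))) < ⊤ := by
  obtain ⟨C, hC1, hC⟩ := poly_bound_aux N m p hdeg M hm
  obtain ⟨c, hc, hcK⟩ := posDef_bound_aux N K hK
  obtain ⟨B, hB0, hB⟩ := phi_bound_aux m
  set A : ℝ := R * C with hA
  have hA0 : 0 ≤ A := by positivity
  set g : ℕ → (Fin N → ℝ) → ℝ := fun n x =>
    B * ((A * (1 + ‖x‖)) ^ n / n.factorial) * Real.exp (-(c * ‖x‖ ^ 2)) with hg
  have hg0 : ∀ n x, 0 ≤ g n x := fun n x => by simp only [hg]; positivity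
  have hgm : ∀ n, Measurable fun x => ENNReal.ofReal (g n x) := fun n => by
    simp only [hg]; fun_prop
  have key : ∀ n : ℕ, ((n.factorial : ENNReal))⁻¹ *
        ∫⁻ ρ in Set.Icc (-R) R, ∫⁻ x : Fin N → ℝ,
          ENNReal.ofReal (‖phiFT m ρ‖ * |ρ| ^ n *
            (MvPolynomial.eval x p + M) ^ ((n : ℝ) / (2 * m)) *
            Real.exp (-(x ⬝ᵥ K *ᵥ x))) ≤
        (∫⁻ x, ENNReal.ofReal (g n x)) * volume (Set.Icc (-R) R) := by
    intro n
    have hf : (0 : ℝ) < n.factorial := by exact_mod_cast n.factorial_pos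
    have hpt : ∀ ρ ∈ Set.Icc (-R) R, (∫⁻ x : Fin N → ℝ,
          ENNReal.ofReal (‖phiFT m ρ‖ * |ρ| ^ n *
            (MvPolynomial.eval x p + M) ^ ((n : ℝ) / (2 * m)) *
            Real.exp (-(x ⬝ᵥ K *ᵥ x)))) ≤
          (n.factorial : ENNReal) * ∫⁻ x, ENNReal.ofReal (g n x) := by
      intro ρ hρ
      rw [← lintegral_const_mul _ (hgm n)]
      refine lintegral_mono fun x => ?_
      rw [← ENNReal.ofReal_natCast, ← ENNReal.ofReal_mul hf.le]
      refine ENNReal.ofReal_le_ofReal ?_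
      have hP0 : 0 ≤ MvPolynomial.eval x p + M := by linarith [hPbound x]
      have hD : 0 ≤ C * (1 + ‖x‖) := by positivity
      have h1 : (MvPolynomial.eval x p + M) ^ ((n : ℝ) / (2 * m)) ≤ (C * (1 + ‖x‖)) ^ n := by
        refine (Real.rpow_le_rpow hP0 (hC x) (by positivity)).trans (le_of_eq ?_)
        rw [← Real.rpow_natCast, ← Real.rpow_mul hD, ← Real.rpow_natCast]
        congr 1
        have : (m : ℝ) ≠ 0 := by exact_mod_cast hm.ne'
        push_cast
        field_simp
      have h2 : |ρ| ^ n ≤ R ^ n := pow_le_pow_left₀ (abs_nonneg _) (abs_le.2 hρ) n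
      have h3 : Real.exp (-(x ⬝ᵥ K *ᵥ x)) ≤ Real.exp (-(c * ‖x‖ ^ 2)) :=
        Real.exp_le_exp.2 (neg_le_neg (hcK x))
      have h4 : 0 ≤ (MvPolynomial.eval x p + M) ^ ((n : ℝ) / (2 * m)) := Real.rpow_nonneg hP0 _
      calc _ ≤ B * R ^ n * (C * (1 + ‖x‖)) ^ n * Real.exp (-(c * ‖x‖ ^ 2)) := by
            gcongr
            exact hB ρ
        _ = _ := by
            simp only [hg, hA, mul_pow]
            field_simp
    calc _ ≤ ((n.factorial : ENNReal))⁻¹ * ∫⁻ ρ in Set.Icc (-R) R,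
          (n.factorial : ENNReal) * ∫⁻ x, ENNReal.ofReal (g n x) :=
          mul_le_mul_right (setLIntegral_mono' measurableSet_Icc hpt) _
      _ = _ := by
          rw [setLIntegral_const, ← mul_assoc, ← mul_assoc, ENNReal.inv_mul_cancel, one_mul]
          · exact_mod_cast n.factorial_ne_zero
          · exact ENNReal.natCast_ne_top _
  refine (ENNReal.tsum_le_tsum key).trans_lt ?_
  rw [ENNReal.tsum_mul_right, ← lintegral_tsum fun n => (hgm n).aemeasurable]
  refine ENNReal.mul_lt_top ?_ (by simp)
  have hsum : ∀ x, ∑' n, ENNReal.ofReal (g n x) =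
      ENNReal.ofReal (B * (Real.exp (A * (1 + ‖x‖)) * Real.exp (-(c * ‖x‖ ^ 2)))) := by
    intro x
    have hs : HasSum (fun n => g n x)
        (B * (Real.exp (A * (1 + ‖x‖)) * Real.exp (-(c * ‖x‖ ^ 2)))) := by
      rw [← mul_assoc]
      have h := NormedSpace.expSeries_div_hasSum_exp (A * (1 + ‖x‖))
      rw [← Real.exp_eq_exp_ℝ] at h
      exact (h.mul_left B).mul_right _
    rw [← ENNReal.ofReal_tsum_of_nonneg (fun n => hg0 n x) hs.summable, hs.tsum_eq]
  simp_rw [hsum]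
  exact ((gauss_aux N hN A c hc).const_mul B).lintegral_lt_top
end

section
/- For every R > 0, define J(R) := e^{M} ∫_{-R}^{R} φ_m(ρ) ( ∫_{ℝ^N} e^{-xᵀKx} e^{iρ · P̃(x)^{1/(2m)}} dx ) dρ and A_n(m, R) := i^n ∫_{-R}^{R} φ_m(ρ) ρ^n dρ. Then J(R) = e^{M} ∑_{n=0}^∞ (A_n(m, R)/n!) ∫_{ℝ^N} P̃(x)^{n/(2m)} e^{-xᵀKx} dx, and this series converges absolutely. -/
open MeasureTheory Matrix

/-- The coefficient `A_n(m, R) := iⁿ ∫_{-R}^{R} φ_m(ρ) ρⁿ dρ`. -/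
noncomputable def coeffA (m : ℕ) (R : ℝ) (n : ℕ) : ℂ :=
  Complex.I ^ n * ∫ ρ in (-R)..R, phiFT m ρ * (ρ : ℂ) ^ n

lemma hasSum_congr_aux {f g : ℕ → ℂ} {a : ℂ} (h : ∀ n, f n = g n) : HasSum f a ↔ HasSum g a := by
  rw [funext h]

lemma aux_inner {X : Type*} [MeasurableSpace X] (μ : Measure X) (g w : X → ℝ)
    (hg : Measurable g) (hw : Measurable w) (hg0 : ∀ x, 0 ≤ g x) (hw0 : ∀ x, 0 ≤ w x)
    (R : ℝ) (hint : Integrable (fun x => Real.exp (R * g x) * w x) μ)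
    (z : ℂ) (hz : ‖z‖ ≤ R) :
    HasSum (fun n : ℕ => z ^ n / (n.factorial : ℂ) * ((∫ x, g x ^ n * w x ∂μ : ℝ) : ℂ))
      (∫ x, (w x : ℂ) * Complex.exp (z * (g x : ℂ)) ∂μ) := by
  have key := hasSum_integral_of_dominated_convergence (μ := μ)
    (F := fun (n : ℕ) x => z ^ n / (n.factorial : ℂ) * ((g x ^ n * w x : ℝ) : ℂ))
    (f := fun x => (w x : ℂ) * Complex.exp (z * (g x : ℂ)))
    (fun n x => (R * g x) ^ n / (n.factorial : ℝ) * w x) ?_ ?_ ?_ ?_ ?_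
  · refine (hasSum_congr_aux fun n => ?_).mpr key
    rw [integral_const_mul, integral_complex_ofReal]
  · intro n
    apply Measurable.aestronglyMeasurable
    fun_prop
  · intro n
    refine Filter.Eventually.of_forall fun x => ?_
    have h1 : ‖z‖ ^ n ≤ R ^ n := pow_le_pow_left₀ (norm_nonneg _) hz n
    have h2 : 0 ≤ g x ^ n * w x := mul_nonneg (pow_nonneg (hg0 x) n) (hw0 x)
    rw [norm_mul, norm_div, norm_pow, Complex.norm_real, Complex.norm_natCast,
      Real.norm_of_nonneg h2, mul_pow]
    calc _ ≤ R ^ n / (n.factorial : ℝ) * (g x ^ n * w x) := by gcongr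
      _ = _ := by ring
  · refine Filter.Eventually.of_forall fun x => ?_
    exact (Real.summable_pow_div_factorial (R * g x)).mul_right _
  · refine hint.congr (Filter.Eventually.of_forall fun x => ?_)
    simp only
    rw [tsum_mul_right, Real.exp_eq_exp_ℝ, NormedSpace.exp_eq_tsum_div]
  · refine Filter.Eventually.of_forall fun x => ?_
    have h : HasSum (fun n : ℕ => (z * (g x : ℂ)) ^ n / (n.factorial : ℂ))
        (Complex.exp (z * g x)) := by
      rw [Complex.exp_eq_exp_ℂ]
      exact NormedSpace.expSeries_div_hasSum_exp _
    refine (hasSum_congr_aux fun n => ?_).mpr (h.mul_left (w x : ℂ))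
    push_cast
    rw [mul_pow]
    ring

lemma phiFT_measurable (m : ℕ) : Measurable (phiFT m) := by
  unfold phiFT
  apply Measurable.const_mul
  apply StronglyMeasurable.measurable
  apply StronglyMeasurable.integral_prod_right (f := fun (ρ r : ℝ) =>
    Complex.exp (-(Complex.I * (ρ : ℂ) * (r : ℂ))) * (Real.exp (-(r ^ (2 * m))) : ℂ))
  apply Measurable.stronglyMeasurable
  unfold Function.uncurry
  fun_prop

lemma phiFT_bounded (m : ℕ) : ∃ C : ℝ, 0 ≤ C ∧ ∀ ρ, ‖phiFT m ρ‖ ≤ C := by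
  refine ⟨‖(1 / (2 * Real.pi) : ℂ)‖ * ∫ r : ℝ, Real.exp (-(r ^ (2 * m))), ?_, fun ρ => ?_⟩
  · have : 0 ≤ ∫ r : ℝ, Real.exp (-(r ^ (2 * m))) := integral_nonneg fun r => (Real.exp_pos _).le
    positivity
  · unfold phiFT
    rw [norm_mul]
    gcongr
    refine (norm_integral_le_integral_norm _).trans (le_of_eq ?_)
    congr 1
    ext r
    rw [norm_mul, Complex.norm_real, Real.norm_of_nonneg (Real.exp_pos _).le, Complex.norm_exp]
    simp

lemma aux_outer {X : Type*} [MeasurableSpace X] (μ : Measure X) (g w : X → ℝ)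
    (hg : Measurable g) (hw : Measurable w) (hg0 : ∀ x, 0 ≤ g x) (hw0 : ∀ x, 0 ≤ w x)
    (R : ℝ) (hR : 0 < R) (hint : Integrable (fun x => Real.exp (R * g x) * w x) μ) (m : ℕ) :
    HasSum (fun n : ℕ => coeffA m R n / (n.factorial : ℂ) * ((∫ x, g x ^ n * w x ∂μ : ℝ) : ℂ))
      (∫ ρ in (-R)..R, phiFT m ρ *
        ∫ x, (w x : ℂ) * Complex.exp (Complex.I * (ρ : ℂ) * (g x : ℂ)) ∂μ) := by
  obtain ⟨C, hC0, hC⟩ := phiFT_bounded m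
  have hφ := phiFT_measurable m
  have hI : ∀ n : ℕ, 0 ≤ ∫ x, g x ^ n * w x ∂μ := fun n =>
    integral_nonneg fun x => mul_nonneg (pow_nonneg (hg0 x) n) (hw0 x)
  have hsum : Summable fun n : ℕ => R ^ n / (n.factorial : ℝ) * ∫ x, g x ^ n * w x ∂μ := by
    have h := (aux_inner μ g w hg hw hg0 hw0 R hint (R : ℂ)
      (by rw [Complex.norm_real, Real.norm_of_nonneg hR.le])).summable
    exact_mod_cast h
  have hle : -R ≤ R := by linarith
  have key := intervalIntegral.hasSum_integral_of_dominated_convergence (μ := volume)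
    (a := -R) (b := R)
    (F := fun (n : ℕ) (ρ : ℝ) => phiFT m ρ * ((Complex.I * (ρ : ℂ)) ^ n / (n.factorial : ℂ) *
      ((∫ x, g x ^ n * w x ∂μ : ℝ) : ℂ)))
    (f := fun ρ : ℝ => phiFT m ρ *
        ∫ x, (w x : ℂ) * Complex.exp (Complex.I * (ρ : ℂ) * (g x : ℂ)) ∂μ)
    (fun n _ => C * (R ^ n / (n.factorial : ℝ) * ∫ x, g x ^ n * w x ∂μ)) ?_ ?_ ?_ ?_ ?_
  · refine (hasSum_congr_aux fun n => ?_).mpr key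
    unfold coeffA
    rw [← intervalIntegral.integral_const_mul, div_mul_eq_mul_div, mul_div_assoc,
      ← intervalIntegral.integral_mul_const]
    congr 1
    ext ρ
    rw [mul_pow]
    ring
  · intro n
    apply Measurable.aestronglyMeasurable
    fun_prop
  · intro n
    refine Filter.Eventually.of_forall fun ρ hρ => ?_
    rw [Set.uIoc_of_le hle] at hρ
    have hρR : |ρ| ≤ R := abs_le.2 ⟨hρ.1.le, hρ.2⟩
    rw [norm_mul, norm_mul, norm_div, norm_pow, norm_mul, Complex.norm_I, one_mul,
      Complex.norm_real, Complex.norm_real, Complex.norm_natCast, Real.norm_of_nonneg (hI n),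
      Real.norm_eq_abs]
    have := hI n
    have := hC ρ
    gcongr
  · exact Filter.Eventually.of_forall fun ρ _ => hsum.mul_left C
  · simp
  · refine Filter.Eventually.of_forall fun ρ hρ => ?_
    rw [Set.uIoc_of_le hle] at hρ
    have hρR : |ρ| ≤ R := abs_le.2 ⟨hρ.1.le, hρ.2⟩
    exact (aux_inner μ g w hg hw hg0 hw0 R hint (Complex.I * ρ)
      (by simpa using hρR)).mul_left _

lemma quad_lower (N : ℕ) (hN : 0 < N) (K : Matrix (Fin N) (Fin N) ℝ) (hK : K.PosDef) :
    ∃ c : ℝ, 0 < c ∧ ∀ x : Fin N → ℝ, c * ‖x‖ ^ 2 ≤ x ⬝ᵥ K *ᵥ x := by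
  have : Nonempty (Fin N) := ⟨⟨0, hN⟩⟩
  have hcont : Continuous fun x : Fin N → ℝ => x ⬝ᵥ K *ᵥ x := by
    unfold dotProduct mulVec dotProduct
    fun_prop
  obtain ⟨y, hy, hmin⟩ := (isCompact_sphere (0 : Fin N → ℝ) 1).exists_isMinOn
    (NormedSpace.sphere_nonempty.2 zero_le_one) hcont.continuousOn
  have hy1 : ‖y‖ = 1 := by simpa using hy
  have hy0 : y ≠ 0 := by
    rintro rfl
    simp at hy1
  refine ⟨y ⬝ᵥ K *ᵥ y, by simpa using hK.dotProduct_mulVec_pos hy0, fun x => ?_⟩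
  by_cases hx : x = 0
  · simp [hx]
  have hx' : 0 < ‖x‖ := norm_pos_iff.2 hx
  have h := hmin (a := ‖x‖⁻¹ • x) (by simp [norm_smul, hx'.ne'])
  simp only [Set.mem_ofPred_eq, mulVec_smul, dotProduct_smul, smul_dotProduct, smul_eq_mul] at h
  calc _ ≤ (‖x‖⁻¹ * (‖x‖⁻¹ * x ⬝ᵥ K *ᵥ x)) * ‖x‖ ^ 2 := by gcongr
    _ = _ := by field_simp

lemma poly_upper (N d : ℕ) (p : MvPolynomial (Fin N) ℝ) (hdeg : p.totalDegree = d) :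
    ∃ C : ℝ, 0 ≤ C ∧ ∀ x : Fin N → ℝ, |MvPolynomial.eval x p| ≤ C * (1 + ‖x‖) ^ d := by
  refine ⟨∑ s ∈ p.support, |p.coeff s|, Finset.sum_nonneg fun _ _ => abs_nonneg _, fun x => ?_⟩
  rw [MvPolynomial.eval_eq', Finset.sum_mul]
  refine (Finset.abs_sum_le_sum_abs _ _).trans (Finset.sum_le_sum fun s hs => ?_)
  rw [abs_mul, Finset.abs_prod]
  gcongr
  have h1 : (1 : ℝ) ≤ 1 + ‖x‖ := by linarith [norm_nonneg x]
  calc ∏ i, |x i ^ s i| ≤ ∏ i, (1 + ‖x‖) ^ s i := by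
        refine Finset.prod_le_prod (fun _ _ => abs_nonneg _) fun i _ => ?_
        rw [abs_pow]
        refine pow_le_pow_left₀ (abs_nonneg _) ?_ _
        have := norm_le_pi_norm x i
        rw [Real.norm_eq_abs] at this
        linarith
    _ = (1 + ‖x‖) ^ (∑ i, s i) := Finset.prod_pow_eq_pow_sum _ _ _
    _ ≤ _ := by
        refine pow_le_pow_right₀ h1 ?_
        rw [← hdeg]
        have := MvPolynomial.le_totalDegree hs
        rwa [Finsupp.sum_fintype _ _ (fun _ => rfl)] at this

lemma gauss_integrable (N : ℕ) (hN : 0 < N) (c a b : ℝ) (hc : 0 < c) :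
    Integrable fun x : Fin N → ℝ => Real.exp (a * ‖x‖ + b - c * ‖x‖ ^ 2) := by
  have hN' : (0 : ℝ) < N := by exact_mod_cast hN
  have hb : 0 < c / (2 * N) := by positivity
  have h1 : Integrable fun x : Fin N → ℝ => ∏ i, Real.exp (-(c / (2 * N)) * x i ^ 2) :=
    Integrable.fintype_prod (f := fun _ (t : ℝ) => Real.exp (-(c / (2 * N)) * t ^ 2))
      fun _ => integrable_exp_neg_mul_sq hb
  refine (h1.const_mul (Real.exp (b + a ^ 2 / (2 * c)))).mono'
    (by apply Continuous.aestronglyMeasurable; fun_prop) (Filter.Eventually.of_forall fun x => ?_)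
  rw [Real.norm_of_nonneg (Real.exp_pos _).le, ← Real.exp_sum, ← Real.exp_add, Real.exp_le_exp,
    ← Finset.mul_sum]
  have h2 : ∑ i, x i ^ 2 ≤ N * ‖x‖ ^ 2 := by
    calc ∑ i, x i ^ 2 ≤ ∑ _i : Fin N, ‖x‖ ^ 2 := by
          refine Finset.sum_le_sum fun i _ => ?_
          rw [← sq_abs]
          exact pow_le_pow_left₀ (abs_nonneg _) (norm_le_pi_norm x i) 2
      _ = _ := by simp
  have h3 : c / (2 * N) * ∑ i, x i ^ 2 ≤ c / 2 * ‖x‖ ^ 2 := by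
    calc _ ≤ c / (2 * N) * (N * ‖x‖ ^ 2) := by gcongr
      _ = _ := by field_simp
  have h4 : a * ‖x‖ ≤ a ^ 2 / (2 * c) + c / 2 * ‖x‖ ^ 2 := by
    have : a ^ 2 / (2 * c) + c / 2 * ‖x‖ ^ 2 - a * ‖x‖ = (a - c * ‖x‖) ^ 2 / (2 * c) := by
      field_simp
      ring
    have : 0 ≤ (a - c * ‖x‖) ^ 2 / (2 * c) := by positivity
    linarith
  linarith

theorem stmt8 (N m : ℕ) (hN : 0 < N) (hm : 0 < m)
    (p : MvPolynomial (Fin N) ℝ) (hdeg : p.totalDegree = 2 * m)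
    (M : ℝ) (hM : 0 ≤ M) (hPbound : ∀ x : Fin N → ℝ, -M ≤ MvPolynomial.eval x p)
    (K : Matrix (Fin N) (Fin N) ℝ) (hK : K.PosDef) (R : ℝ) (hR : 0 < R)
    (J : ℂ)
    (hJ : J = (Real.exp M : ℂ) *
      ∫ ρ in (-R)..R, phiFT m ρ *
        ∫ x : Fin N → ℝ, Complex.exp (-((x ⬝ᵥ K *ᵥ x : ℝ) : ℂ)) *
          Complex.exp (Complex.I * (ρ : ℂ) *
            (((MvPolynomial.eval x p + M) ^ ((1 : ℝ) / (2 * m)) : ℝ) : ℂ))) :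
    HasSum (fun n : ℕ => (Real.exp M : ℂ) * (coeffA m R n / (n.factorial : ℂ)) *
        ((∫ x : Fin N → ℝ,
          (MvPolynomial.eval x p + M) ^ ((n : ℝ) / (2 * m)) *
            Real.exp (-(x ⬝ᵥ K *ᵥ x)) : ℝ) : ℂ)) J ∧
      Summable (fun n : ℕ => ‖(Real.exp M : ℂ) * (coeffA m R n / (n.factorial : ℂ)) *
        ((∫ x : Fin N → ℝ,
          (MvPolynomial.eval x p + M) ^ ((n : ℝ) / (2 * m)) *
            Real.exp (-(x ⬝ᵥ K *ᵥ x)) : ℝ) : ℂ)‖) := by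
  have hm' : (0 : ℝ) < 2 * m := by positivity
  have hP : ∀ x : Fin N → ℝ, 0 ≤ MvPolynomial.eval x p + M := fun x => by linarith [hPbound x]
  have hpc : Continuous fun x : Fin N → ℝ => MvPolynomial.eval x p := MvPolynomial.continuous_eval p
  have hqc : Continuous fun x : Fin N → ℝ => x ⬝ᵥ K *ᵥ x := by
    unfold dotProduct mulVec dotProduct
    fun_prop
  set g : (Fin N → ℝ) → ℝ := fun x => (MvPolynomial.eval x p + M) ^ ((1 : ℝ) / (2 * m)) with hgdef
  have hgc : Continuous g :=
    (hpc.add continuous_const).rpow_const fun x => Or.inr (by positivity)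
  have hg0 : ∀ x, 0 ≤ g x := fun x => Real.rpow_nonneg (hP x) _
  have hgn : ∀ (n : ℕ) (x : Fin N → ℝ),
      (MvPolynomial.eval x p + M) ^ ((n : ℝ) / (2 * m)) = g x ^ n := by
    intro n x
    rw [hgdef, ← Real.rpow_natCast, ← Real.rpow_mul (hP x)]
    congr 1
    ring
  obtain ⟨c, hc, hquad⟩ := quad_lower N hN K hK
  obtain ⟨C, hC, hpoly⟩ := poly_upper N (2 * m) p hdeg
  have hgle : ∀ x, g x ≤ (C + M) ^ ((1 : ℝ) / (2 * m)) * (1 + ‖x‖) := by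
    intro x
    have h1 : (1 : ℝ) ≤ (1 + ‖x‖) ^ (2 * m) := one_le_pow₀ (by linarith [norm_nonneg x])
    have h2 : MvPolynomial.eval x p + M ≤ (C + M) * (1 + ‖x‖) ^ (2 * m) := by
      have := le_of_abs_le (hpoly x)
      nlinarith
    calc g x ≤ ((C + M) * (1 + ‖x‖) ^ (2 * m)) ^ ((1 : ℝ) / (2 * m)) :=
          Real.rpow_le_rpow (hP x) h2 (by positivity)
      _ = _ := by
          rw [Real.mul_rpow (by positivity) (by positivity), ← Real.rpow_natCast,
            ← Real.rpow_mul (by positivity)]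
          push_cast
          rw [mul_one_div_cancel hm'.ne', Real.rpow_one]
  have hint : Integrable (fun x : Fin N → ℝ => Real.exp (R * g x) * Real.exp (-(x ⬝ᵥ K *ᵥ x))) := by
    set D := (C + M) ^ ((1 : ℝ) / (2 * m))
    refine (gauss_integrable N hN c (R * D) (R * D) hc).mono'
      (by apply Continuous.aestronglyMeasurable; fun_prop)
      (Filter.Eventually.of_forall fun x => ?_)
    rw [← Real.exp_add, Real.norm_of_nonneg (Real.exp_pos _).le, Real.exp_le_exp]
    have h1 := mul_le_mul_of_nonneg_left (hgle x) hR.le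
    have h2 := hquad x
    linarith
  have key := (aux_outer volume g (fun x => Real.exp (-(x ⬝ᵥ K *ᵥ x))) hgc.measurable
    (by apply Continuous.measurable; fun_prop) hg0 (fun x => (Real.exp_pos _).le) R hR hint m).mul_left
      (Real.exp M : ℂ)
  have main : HasSum (fun n : ℕ => (Real.exp M : ℂ) * (coeffA m R n / (n.factorial : ℂ)) *
        ((∫ x : Fin N → ℝ,
          (MvPolynomial.eval x p + M) ^ ((n : ℝ) / (2 * m)) *
            Real.exp (-(x ⬝ᵥ K *ᵥ x)) : ℝ) : ℂ)) J := by
    rw [hJ]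
    simp only [hgn, mul_assoc]
    simpa only [mul_assoc, Complex.ofReal_exp, Complex.ofReal_neg] using key
  exact ⟨main, main.summable.norm⟩
end

section
/- Define J(R) := e^{M} ∫_{-R}^{R} φ_m(ρ) ( ∫_{ℝ^N} e^{-xᵀKx} e^{iρ · P̃(x)^{1/(2m)}} dx ) dρ for R > 0. Then J(R) tends, as R → ∞, to the original integral: lim_{R→∞} J(R) = ∫_{ℝ^N} e^{-xᵀKx − P(x)} dx. -/
open MeasureTheory Matrix

open scoped FourierTransform

noncomputable def gFun (m : ℕ) (r : ℝ) : ℂ := ((Real.exp (-(r ^ (2 * m))) : ℝ) : ℂ)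

lemma integrable_pow_mul_exp (m : ℕ) (hm : 0 < m) (k : ℕ) :
    Integrable (fun r : ℝ => r ^ k * Real.exp (-(r ^ (2 * m)))) := by
  have h := integrable_rpow_mul_exp_neg_mul_sq (b := 1) one_pos (s := (k : ℝ))
    (by have : (0:ℝ) ≤ k := Nat.cast_nonneg k
        linarith)
  simp only [Real.rpow_natCast] at h
  refine (h.const_mul (Real.exp 1)).mono (by fun_prop) (Filter.Eventually.of_forall fun r => ?_)
  rw [norm_mul, norm_mul, norm_mul, mul_left_comm]
  refine mul_le_mul_of_nonneg_left ?_ (norm_nonneg _)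
  simp only [Real.norm_eq_abs, Real.abs_exp]
  rw [← Real.exp_add, Real.exp_le_exp]
  rw [pow_mul]
  rcases le_total 1 (r ^ 2) with h2 | h2
  · have : r ^ 2 ≤ (r ^ 2) ^ m := le_self_pow₀ h2 hm.ne'
    linarith
  · have : 0 ≤ (r ^ 2) ^ m := by positivity
    linarith

lemma integrable_pow_mul_gFun (m : ℕ) (hm : 0 < m) (k : ℕ) (c : ℂ) :
    Integrable (fun r : ℝ => c * (r : ℂ) ^ k * gFun m r) := by
  have h := ((integrable_pow_mul_exp m hm k).ofReal (𝕜 := ℂ)).const_mul c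
  refine h.congr (Filter.Eventually.of_forall fun r => ?_)
  simp [gFun, mul_assoc]

lemma gFun_hasDerivAt (m : ℕ) (r : ℝ) :
    HasDerivAt (gFun m) (-(2 * m : ℂ) * (r : ℂ) ^ (2 * m - 1) * gFun m r) r := by
  have h := (((hasDerivAt_pow (2 * m) r).neg).exp).ofReal_comp
  have e : -(2 * m : ℂ) * (r : ℂ) ^ (2 * m - 1) * gFun m r =
      ((Real.exp (-(r ^ (2 * m))) * -(((2 * m : ℕ) : ℝ) * r ^ (2 * m - 1)) : ℝ) : ℂ) := by
    rw [gFun, Complex.ofReal_mul]; push_cast; ring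
  rw [e]
  exact h

lemma gFun_deriv (m : ℕ) :
    deriv (gFun m) = fun r : ℝ => -(2 * m : ℂ) * (r : ℂ) ^ (2 * m - 1) * gFun m r :=
  funext fun r => (gFun_hasDerivAt m r).deriv

lemma gFun_hasDerivAt2 (m : ℕ) (r : ℝ) :
    HasDerivAt (deriv (gFun m))
      ((-(2 * m : ℂ) * ((2 * m - 1 : ℕ) : ℂ)) * (r : ℂ) ^ (2 * m - 1 - 1) * gFun m r
        + ((2 * m : ℂ) * (2 * m : ℂ)) * (r : ℂ) ^ ((2 * m - 1) + (2 * m - 1)) * gFun m r) r := by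
  rw [gFun_deriv]
  have h1 : HasDerivAt (fun r : ℝ => (r : ℂ) ^ (2 * m - 1))
      (((2 * m - 1 : ℕ) : ℂ) * (r : ℂ) ^ (2 * m - 1 - 1)) r :=
    (hasDerivAt_pow (2 * m - 1) (r : ℂ)).comp_ofReal
  have h := (h1.const_mul (-(2 * m : ℂ))).mul (gFun_hasDerivAt m r)
  refine HasDerivAt.congr_deriv h ?_
  rw [pow_add]; ring

lemma gFun_integrable (m : ℕ) (hm : 0 < m) : Integrable (gFun m) := by
  simpa using integrable_pow_mul_gFun m hm 0 1

lemma gFun_continuous (m : ℕ) : Continuous (gFun m) := by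
  unfold gFun; fun_prop

lemma gFun_fourier_integrable (m : ℕ) (hm : 0 < m) : Integrable (𝓕 (gFun m)) := by
  have hi := gFun_integrable m hm
  have hi1 : Integrable (deriv (gFun m)) := by
    rw [gFun_deriv]; exact integrable_pow_mul_gFun m hm _ _
  have hi2 : Integrable (deriv (deriv (gFun m))) := by
    rw [show deriv (deriv (gFun m)) = _ from funext fun r => (gFun_hasDerivAt2 m r).deriv]
    exact (integrable_pow_mul_gFun m hm _ _).add (integrable_pow_mul_gFun m hm _ _)
  have e1 := Real.fourier_deriv hi (fun r => (gFun_hasDerivAt m r).differentiableAt) hi1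
  have e2 := Real.fourier_deriv hi1 (fun r => (gFun_hasDerivAt2 m r).differentiableAt) hi2
  have b : ∀ (f : ℝ → ℂ) (x : ℝ), ‖𝓕 f x‖ ≤ ∫ v, ‖f v‖ := fun f x =>
    VectorFourier.norm_fourierIntegral_le_integral_norm _ _ _ _ _
  have hc : Continuous (𝓕 (gFun m)) :=
    VectorFourier.fourierIntegral_continuous Real.continuous_fourierChar
      (by exact continuous_inner) hi
  refine (integrable_inv_one_add_sq.const_mul
    ((∫ v, ‖gFun m v‖) + ∫ v, ‖deriv (deriv (gFun m)) v‖)).mono' hc.aestronglyMeasurable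
    (Filter.Eventually.of_forall fun x => ?_)
  have h0 := b (gFun m) x
  have h2 := b (deriv (deriv (gFun m))) x
  rw [e2, e1] at h2
  simp only [norm_smul, norm_mul, Complex.norm_I, Complex.norm_real, Complex.norm_ofNat,
    Real.norm_eq_abs, abs_of_pos Real.pi_pos] at h2
  have hx : x ^ 2 * ‖𝓕 (gFun m) x‖ ≤ ∫ v, ‖deriv (deriv (gFun m)) v‖ := by
    refine le_trans ?_ h2
    have : 2 * Real.pi * 1 * |x| * (2 * Real.pi * 1 * |x| * ‖𝓕 (gFun m) x‖)
      = (4 * Real.pi ^ 2) * (x ^ 2 * ‖𝓕 (gFun m) x‖) := by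
      rw [← sq_abs x]; ring
    rw [this]
    have hp : 1 ≤ 4 * Real.pi ^ 2 := by nlinarith [Real.pi_gt_three]
    exact le_mul_of_one_le_left (by positivity) hp
  rw [← div_eq_mul_inv, le_div_iff₀ (by positivity)]
  linarith

lemma phiFT_eq (m : ℕ) (ρ : ℝ) :
    phiFT m ρ = (1 / (2 * Real.pi)) * 𝓕 (gFun m) (ρ / (2 * Real.pi)) := by
  rw [phiFT, Real.fourier_real_eq_integral_exp_smul]
  congr 1
  refine integral_congr_ae (Filter.Eventually.of_forall fun r => ?_)
  simp only [gFun, smul_eq_mul]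
  congr 2
  have : (Real.pi : ℂ) ≠ 0 := by exact_mod_cast Real.pi_ne_zero
  push_cast
  field_simp

lemma phiFT_integrable (m : ℕ) (hm : 0 < m) : Integrable (phiFT m) := by
  have h := ((gFun_fourier_integrable m hm).comp_div (g := 𝓕 (gFun m))
    (R := 2 * Real.pi) (by positivity)).const_mul ((1 : ℂ) / (2 * Real.pi))
  exact h.congr (Filter.Eventually.of_forall fun ρ => (phiFT_eq m ρ).symm)

lemma phiFT_inversion (m : ℕ) (hm : 0 < m) (s : ℝ) :
    ∫ ρ : ℝ, phiFT m ρ * Complex.exp (Complex.I * (ρ : ℂ) * (s : ℂ)) = gFun m s := by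
  have h := (gFun_integrable m hm).fourierInv_fourier_eq (gFun_fourier_integrable m hm)
    (v := s) (gFun_continuous m).continuousAt
  rw [Real.fourierInv_eq'] at h
  rw [← h]
  have h2 := Measure.integral_comp_div (fun w : ℝ => Complex.exp (((2 * Real.pi * inner ℝ w s : ℝ) : ℂ) * Complex.I) • 𝓕 (gFun m) w) (2 * Real.pi)
  rw [abs_of_pos (by positivity)] at h2
  have hpi : (Real.pi : ℂ) ≠ 0 := by exact_mod_cast Real.pi_ne_zero
  have h3 : ∀ ρ : ℝ, phiFT m ρ * Complex.exp (Complex.I * (ρ : ℂ) * (s : ℂ)) =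
    (1 / (2 * Real.pi) : ℂ) * (Complex.exp (((2 * Real.pi * inner ℝ (ρ / (2 * Real.pi)) s : ℝ) : ℂ) * Complex.I) • 𝓕 (gFun m) (ρ / (2 * Real.pi))) := by
    intro ρ
    rw [phiFT_eq, smul_eq_mul]
    have : Complex.I * (ρ : ℂ) * (s : ℂ) = ((2 * Real.pi * inner ℝ (ρ / (2 * Real.pi)) s : ℝ) : ℂ) * Complex.I := by
      simp
      field_simp
    rw [this]; ring
  simp_rw [h3]
  rw [integral_const_mul, h2, Complex.real_smul, ← mul_assoc]
  have e : (1 / (2 * Real.pi) : ℂ) * ((2 * Real.pi : ℝ) : ℂ) = 1 := by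
    push_cast
    field_simp
  rw [e, one_mul]

lemma quad_coercive (N : ℕ) (hN : 0 < N) (K : Matrix (Fin N) (Fin N) ℝ) (hK : K.PosDef) :
    ∃ c > 0, ∀ x : Fin N → ℝ, c * ∑ i, x i ^ 2 ≤ x ⬝ᵥ K *ᵥ x := by
  have : Nonempty (Fin N) := ⟨⟨0, hN⟩⟩
  have hcont : Continuous (fun x : Fin N → ℝ => x ⬝ᵥ K *ᵥ x) := by fun_prop
  obtain ⟨y, hy, hmin⟩ := (isCompact_sphere (0 : Fin N → ℝ) 1).exists_isMinOn
    (NormedSpace.sphere_nonempty.mpr zero_le_one) hcont.continuousOn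
  have hy1 : ‖y‖ = 1 := by simpa using hy
  have hy0 : y ≠ 0 := by rintro rfl; simp at hy1
  have hpos : 0 < y ⬝ᵥ K *ᵥ y := by simpa using hK.dotProduct_mulVec_pos hy0
  have hNp : (0 : ℝ) < N := by exact_mod_cast hN
  refine ⟨(y ⬝ᵥ K *ᵥ y) / N, by positivity, fun x => ?_⟩
  by_cases hx : x = 0
  · subst hx; simp
  have hxn : 0 < ‖x‖ := norm_pos_iff.mpr hx
  have h1 := hmin (show ‖x‖⁻¹ • x ∈ Metric.sphere (0 : Fin N → ℝ) 1 by
    simp [norm_smul, hxn.ne'])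
  simp only [Set.mem_ofPred_eq, mulVec_smul, dotProduct_smul, smul_dotProduct, smul_eq_mul] at h1
  have h2 : ∑ i, x i ^ 2 ≤ N * ‖x‖ ^ 2 := by
    have : ∑ i, x i ^ 2 ≤ ∑ i : Fin N, ‖x‖ ^ 2 := Finset.sum_le_sum fun i _ => by
      rw [← sq_abs]
      exact pow_le_pow_left₀ (abs_nonneg _) (norm_le_pi_norm x i) 2
    simpa using this
  calc (y ⬝ᵥ K *ᵥ y) / N * ∑ i, x i ^ 2 ≤ (y ⬝ᵥ K *ᵥ y) / N * (N * ‖x‖ ^ 2) := by gcongr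
    _ = (y ⬝ᵥ K *ᵥ y) * ‖x‖ ^ 2 := by field_simp
    _ ≤ (‖x‖⁻¹ * (‖x‖⁻¹ * (x ⬝ᵥ K *ᵥ x))) * ‖x‖ ^ 2 := by gcongr
    _ = _ := by field_simp

lemma quad_integrable (N : ℕ) (hN : 0 < N) (K : Matrix (Fin N) (Fin N) ℝ) (hK : K.PosDef) :
    Integrable (fun x : Fin N → ℝ => Real.exp (-(x ⬝ᵥ K *ᵥ x))) := by
  obtain ⟨c, hc, h⟩ := quad_coercive N hN K hK
  have hi : Integrable (fun x : Fin N → ℝ => ∏ i, Real.exp (-c * x i ^ 2)) :=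
    Integrable.fintype_prod (fun _ => integrable_exp_neg_mul_sq hc)
  refine hi.mono' (by fun_prop) (Filter.Eventually.of_forall fun x => ?_)
  rw [Real.norm_eq_abs, Real.abs_exp, ← Real.exp_sum, Real.exp_le_exp, ← Finset.mul_sum]
  linarith [h x]

theorem stmt9 (N m : ℕ) (hN : 0 < N) (hm : 0 < m)
    (p : MvPolynomial (Fin N) ℝ) (hdeg : p.totalDegree = 2 * m)
    (M : ℝ) (hM : 0 ≤ M) (hPbound : ∀ x : Fin N → ℝ, -M ≤ MvPolynomial.eval x p)
    (K : Matrix (Fin N) (Fin N) ℝ) (hK : K.PosDef)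
    (J : ℝ → ℂ)
    (hJ : ∀ R > 0, J R = (Real.exp M : ℂ) *
      ∫ ρ in (-R)..R, phiFT m ρ *
        ∫ x : Fin N → ℝ, Complex.exp (-((x ⬝ᵥ K *ᵥ x : ℝ) : ℂ)) *
          Complex.exp (Complex.I * (ρ : ℂ) *
            (((MvPolynomial.eval x p + M) ^ ((1 : ℝ) / (2 * m)) : ℝ) : ℂ))) :
    Filter.Tendsto J Filter.atTop
      (nhds ((∫ x : Fin N → ℝ,
        Real.exp (-(x ⬝ᵥ K *ᵥ x) - MvPolynomial.eval x p) : ℝ) : ℂ)) := by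
  set q : (Fin N → ℝ) → ℝ := fun x => (MvPolynomial.eval x p + M) ^ ((1 : ℝ) / (2 * m)) with hq
  have hqc : Continuous q := by
    refine Continuous.rpow_const ((MvPolynomial.continuous_eval p).add continuous_const) ?_
    intro x; right; positivity
  have hqm : ∀ x, q x ^ (2 * m) = MvPolynomial.eval x p + M := by
    intro x
    have h0 : 0 ≤ MvPolynomial.eval x p + M := by linarith [hPbound x]
    have := Real.rpow_inv_natCast_pow h0 (n := 2 * m) (by omega)
    simpa [hq] using this
  -- the integrand on the product space
  set F : ℝ × (Fin N → ℝ) → ℂ := fun z => phiFT m z.1 *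
    (Complex.exp (-((z.2 ⬝ᵥ K *ᵥ z.2 : ℝ) : ℂ)) *
      Complex.exp (Complex.I * (z.1 : ℂ) * (q z.2 : ℂ))) with hF
  have hquad : Integrable (fun x : Fin N → ℝ => Complex.exp (-((x ⬝ᵥ K *ᵥ x : ℝ) : ℂ))) := by
    refine ((quad_integrable N hN K hK).ofReal (𝕜 := ℂ)).congr
      (Filter.Eventually.of_forall fun x => ?_)
    simp
  have hFi : Integrable F (volume.prod volume) := by
    have h1 := (phiFT_integrable m hm).mul_prod hquad
    have hc : Continuous fun z : ℝ × (Fin N → ℝ) =>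
        Complex.exp (Complex.I * (z.1 : ℂ) * (q z.2 : ℂ)) := by fun_prop
    have h2 := h1.mul_bdd (c := 1) hc.aestronglyMeasurable
      (Filter.Eventually.of_forall fun z => by
        rw [show Complex.I * (z.1 : ℂ) * (q z.2 : ℂ) = ((z.1 * q z.2 : ℝ) : ℂ) * Complex.I by
          push_cast; ring, Complex.norm_exp_ofReal_mul_I])
    refine h2.congr (Filter.Eventually.of_forall fun z => ?_)
    simp only [hF]; ring
  have hinner : ∀ ρ, phiFT m ρ * ∫ x : Fin N → ℝ, Complex.exp (-((x ⬝ᵥ K *ᵥ x : ℝ) : ℂ)) *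
          Complex.exp (Complex.I * (ρ : ℂ) * (q x : ℂ)) = ∫ x, F (ρ, x) := by
    intro ρ
    rw [← integral_const_mul]
  have hlim : Filter.Tendsto (fun R : ℝ => (Real.exp M : ℂ) * ∫ ρ in (-R)..R, ∫ x, F (ρ, x))
      Filter.atTop (nhds ((Real.exp M : ℂ) * ∫ ρ, ∫ x, F (ρ, x))) :=
    (intervalIntegral_tendsto_integral hFi.integral_prod_left Filter.tendsto_neg_atTop_atBot
      Filter.tendsto_id).const_mul _
  have hval : (Real.exp M : ℂ) * ∫ ρ, ∫ x, F (ρ, x) = ((∫ x : Fin N → ℝ,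
        Real.exp (-(x ⬝ᵥ K *ᵥ x) - MvPolynomial.eval x p) : ℝ) : ℂ) := by
    rw [integral_integral_swap (f := fun ρ x => F (ρ, x)) hFi, ← integral_const_mul,
      ← integral_complex_ofReal]
    refine integral_congr_ae (Filter.Eventually.of_forall fun x => ?_)
    have : ∀ ρ, F (ρ, x) = Complex.exp (-((x ⬝ᵥ K *ᵥ x : ℝ) : ℂ)) *
        (phiFT m ρ * Complex.exp (Complex.I * (ρ : ℂ) * (q x : ℂ))) := by
      intro ρ; simp only [hF]; ring
    simp only [this]
    rw [integral_const_mul, phiFT_inversion m hm, gFun, hqm]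
    rw [← Complex.ofReal_neg, ← Complex.ofReal_exp, ← Complex.ofReal_mul, ← Complex.ofReal_mul,
      ← Real.exp_add, ← Real.exp_add]
    congr 2; ring
  rw [← hval]
  refine hlim.congr' ?_
  filter_upwards [Filter.eventually_gt_atTop 0] with R hR
  rw [hJ R hR]
  simp only [← hinner]
  rfl
end
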